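/- For every λ > 0 and every θ ∈ ℝ, at least one of the following holds: for all odd k ≥ 1 and all E ∈ ℝ, y_k(E, λ, θ) = x_k(E, λ, 0), or for all even k ≥ 0 and all E ∈ ℝ, y_k(E, λ, θ) = x_k(E, λ, 0). -/

import Mathlib

/-- `ω = (√5 - 1)/2`, the inverse of the golden mean. -/
noncomputable def goldenOmega : ℝ := (Real.sqrt 5 - 1) / 2

/-- The Fibonacci potential: `v_θ(n) = 1` if the fractional part of `nω + θ`
lies in `[1 - ω, 1)`, and `0` otherwise. -/
noncomputable def vTheta (θ : ℝ) (n : ℤ) : ℝ :=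
  if Int.fract ((n : ℝ) * goldenOmega + θ) ∈ Set.Ico (1 - goldenOmega) 1 then 1 else 0

/-- The one-step transfer matrix `T(m, E, λ, θ)` with rows
`(E - λ v_θ(m), -1)` and `(1, 0)`. -/
noncomputable def Tmat (lam θ E : ℝ) (m : ℤ) : Matrix (Fin 2) (Fin 2) ℝ :=
  !![E - lam * vTheta θ m, -1; 1, 0]

/-- The transfer matrix over `[1, n]`:
`M(n, E, λ, θ) = T(n, E, λ, θ) ⋯ T(1, E, λ, θ)` (with `M(0) = 1`). -/
noncomputable def Mmat (lam θ E : ℝ) : ℕ → Matrix (Fin 2) (Fin 2) ℝ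
  | 0 => 1
  | n + 1 => Tmat lam θ E ((n : ℤ) + 1) * Mmat lam θ E n

/-- The trace `x_k(E, λ, θ) = tr M(F_k, E, λ, θ)`, where `F_k = Nat.fib (k + 2)`
(the paper's Fibonacci numbers `F_{-1} = F_0 = 1`, `F_k = F_{k-1} + F_{k-2}`). -/
noncomputable def xTrace (lam θ : ℝ) (k : ℕ) (E : ℝ) : ℝ :=
  Matrix.trace (Mmat lam θ E (Nat.fib (k + 2)))

/-- The transfer matrix over the left half-line:
`M(-n, E, λ, θ) = T(-n+1, E, λ, θ)⁻¹ ⋯ T(0, E, λ, θ)⁻¹` for `n ≥ 1` (with `M(-0) = 1`);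
here `Mneg lam θ E n` is `M(-n, E, λ, θ)`. -/
noncomputable def Mneg (lam θ E : ℝ) : ℕ → Matrix (Fin 2) (Fin 2) ℝ
  | 0 => 1
  | n + 1 => (Tmat lam θ E (-(n : ℤ)))⁻¹ * Mneg lam θ E n

/-- The trace `y_k(E, λ, θ) = tr M(-F_k, E, λ, θ)`, where `F_k = Nat.fib (k + 2)`. -/
noncomputable def yTrace (lam θ : ℝ) (k : ℕ) (E : ℝ) : ℝ :=
  Matrix.trace (Mneg lam θ E (Nat.fib (k + 2)))

/-!
The potential at `n` is the increment `⌊(n+1)ω + θ⌋ - ⌊nω + θ⌋`. Put `q = F_k` and `p = F_{k-1}`.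
Since `q |qω - p| < 1`, over a window of `q` consecutive sites the orbit `nω + θ` has the same
integer parts as a rational orbit `(mp + j)/q`, provided that the integer part grows by exactly `p`
over the window. Because `p` and `q` are coprime, changing `j` merely rotates the resulting word of
length `q`. All such windows therefore give cyclically conjugate products of transfer matrices, which
have the same trace, and inversion does not change the trace of a matrix in `SL₂`.

By `qω - p = -(-ω)^(k+2)`, the integer part always grows by `p` over the window `[1, q]` at `θ = 0`,
and it does so over the window `[1 - q, 0]` exactly when `θ + ω` and `θ + ω + (-ω)^(k+2)` have the
same integer part. The shift has the sign of `(-1)^k` and is smaller than `1/2` in absolute value, so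
odd `k` work if the fractional part of `θ + ω` is at least `1/2`, and even `k` work otherwise.
-/

section Matrices

variable {R : Type*}

theorem trace_list_prod_eq_of_isRotated {n : Type*} [Fintype n] [DecidableEq n] [CommSemiring R]
    {l l' : List (Matrix n n R)} (h : l ~r l') : l.prod.trace = l'.prod.trace := by
  obtain ⟨r, rfl⟩ := h
  rw [List.rotate_eq_drop_append_take_mod, List.prod_append, Matrix.trace_mul_comm,
    ← List.prod_append, List.take_append_drop]

theorem trace_inv_eq_trace_of_det_eq_one [CommRing R] {A : Matrix (Fin 2) (Fin 2) R}
    (h : A.det = 1) : A⁻¹.trace = A.trace := by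
  rw [Matrix.inv_def, h, Matrix.adjugate_fin_two]
  simp [Matrix.trace_fin_two, add_comm]

variable [CommRing R]

/-- The transfer matrix over a finite word `u` of potential values: the product of the matrices
with rows `(E - λ v, -1)` and `(1, 0)`, the first letter of `u` acting first, hence being the
rightmost factor. -/
def transferMatrix (lam E : R) (u : List R) : Matrix (Fin 2) (Fin 2) R :=
  (u.map fun v ↦ !![E - lam * v, -1; 1, 0]).reverse.prod

theorem trace_transferMatrix_eq_of_isRotated (lam E : R) {u v : List R} (h : u ~r v) :
    (transferMatrix lam E u).trace = (transferMatrix lam E v).trace :=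
  trace_list_prod_eq_of_isRotated (h.map _).reverse

theorem det_transferMatrix (lam E : R) (u : List R) : (transferMatrix lam E u).det = 1 := by
  induction u with
  | nil => simp [transferMatrix]
  | cons v u ih =>
    rw [transferMatrix] at ih ⊢
    simp [ih, Matrix.det_fin_two]

end Matrices

section ChristoffelWords

/-- The increment of `⌊· / q⌋` from `n` to `n + p`: the letter that a line of slope `p / q` produces
when it passes the height `n / q`. -/
def christoffelLetter (p q n : ℤ) : ℤ := (n + p) / q - n / q

/-- The word of length `q` produced by the line of slope `p / q` through the height `j / q`. For
coprime `p` and `q` these words, as `j` varies, are the conjugates of the Christoffel word of slope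
`p / q`. -/
def christoffelWord (p : ℤ) (q : ℕ) (j : ℤ) : List ℤ :=
  (List.range q).map fun m : ℕ ↦ christoffelLetter p q (m * p + j)

theorem christoffelLetter_eq_of_modEq {q : ℤ} (hq : q ≠ 0) (p : ℤ) {m n : ℤ}
    (h : m ≡ n [ZMOD q]) : christoffelLetter p q m = christoffelLetter p q n := by
  obtain ⟨c, rfl⟩ := Int.modEq_iff_add_fac.1 h
  rw [christoffelLetter, christoffelLetter, add_right_comm, Int.add_mul_ediv_left _ _ hq,
    Int.add_mul_ediv_left _ _ hq, add_sub_add_right_eq_sub]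

theorem rotate_map_range_of_periodic {α : Type*} {f : ℕ → α} {q : ℕ}
    (hf : Function.Periodic f q) (r : ℕ) :
    ((List.range q).map f).rotate r = (List.range q).map fun m ↦ f (m + r) :=
  List.ext_getElem (by simp) fun m _ _ ↦ by simp [List.getElem_rotate, hf.map_mod_nat]

theorem christoffelWord_isRotated {p : ℤ} {q : ℕ} (hq : 0 < q) (hpq : IsCoprime p q) (i j : ℤ) :
    christoffelWord p q i ~r christoffelWord p q j := by
  have hq₀ : (q : ℤ) ≠ 0 := by omega
  obtain ⟨x, y, hxy⟩ := hpq
  obtain ⟨r, -, hr⟩ := Int.existsUnique_equiv_nat (x * (j - i)) (b := q) (by omega)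
  have hrp : (r : ℤ) * p + i ≡ j [ZMOD q] :=
    ((hr.mul_right p).add_right i).trans <|
      Int.modEq_iff_add_fac.2 ⟨y * (j - i), by linear_combination -(j - i) * hxy⟩
  refine ⟨r, ?_⟩
  rw [christoffelWord, rotate_map_range_of_periodic]
  · refine List.map_congr_left fun m _ ↦ christoffelLetter_eq_of_modEq hq₀ p ?_
    push_cast
    rw [add_mul, add_assoc]
    exact hrp.add_left _
  · refine fun m ↦ christoffelLetter_eq_of_modEq hq₀ p (Int.modEq_iff_add_fac.2 ⟨-p, ?_⟩)
    push_cast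
    ring

end ChristoffelWords

section MechanicalWords

variable {K : Type*} [CommRing K] [LinearOrder K] [IsStrictOrderedRing K] [FloorRing K]

/-- The (lower) mechanical word of slope `α`, intercept `ρ` and length `n`. -/
def mechanicalWord (α ρ : K) (n : ℕ) : List ℤ :=
  (List.range n).map fun m : ℕ ↦ ⌊(m + 1) * α + ρ⌋ - ⌊m * α + ρ⌋

theorem natCast_sub_mul_lt_one {m l q : ℕ} (hm : m ≤ q) (hl : l ≤ q) {δ : K}
    (hδ : q * |δ| < 1) : ((m : K) - l) * δ < 1 := by
  have hml : |(m : K) - l| ≤ q := by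
    have hm' : (m : K) ≤ q := mod_cast hm
    have hl' : (l : K) ≤ q := mod_cast hl
    rw [abs_le]
    constructor <;> linarith [m.cast_nonneg (α := K), l.cast_nonneg (α := K)]
  calc ((m : K) - l) * δ ≤ |(m : K) - l| * |δ| := (le_abs_self _).trans_eq (abs_mul _ _)
    _ ≤ q * |δ| := by gcongr
    _ < 1 := hδ

theorem mul_floor_sub_lt_add {α : K} {p : ℤ} {q : ℕ} (hpq : IsCoprime p q)
    (hα : q * |q * α - p| < 1) (ρ : K) {m l : ℕ} (hm : m < q) (hl : l < q) :
    q * ⌊m * α + ρ⌋ - m * p < q * ⌊l * α + ρ⌋ - l * p + q := by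
  -- Otherwise `q (a - b - 1) - (m - l) p` would be an integer in `[0, 1)`, hence zero, and
  -- coprimality would force `m = l`.
  by_contra! hge
  have hne : m ≠ l := by
    rintro rfl
    omega
  set a := ⌊m * α + ρ⌋
  set b := ⌊l * α + ρ⌋
  have hab : (a : K) - b - 1 < (m - l) * α := by
    linarith [Int.floor_le (m * α + ρ), Int.lt_floor_add_one (l * α + ρ)]
  have hnonneg : 0 ≤ q * (a - b - 1) - (m - l) * p := by linarith
  have hlt : q * (a - b - 1) - (m - l) * p < 1 := by
    have hqK : (0 : K) < q := mod_cast hm.pos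
    have : (q : K) * (a - b - 1) - (m - l) * p < 1 := by
      calc (q : K) * (a - b - 1) - (m - l) * p < q * ((m - l) * α) - (m - l) * p := by gcongr
        _ = (m - l) * (q * α - p) := by ring
        _ < 1 := natCast_sub_mul_lt_one hm.le hl.le hα
    exact_mod_cast this
  have hzero : q * (a - b - 1) = (m - l) * p := by omega
  have hdvd : (q : ℤ) ∣ m - l := hpq.symm.dvd_of_dvd_mul_right ⟨_, hzero.symm⟩
  have hml : (m : ℤ) - l = 0 := Int.eq_zero_of_abs_lt_dvd hdvd (by rw [abs_lt]; omega)
  exact hne (by omega)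

theorem exists_floor_eq_ediv {α : K} {p : ℤ} {q : ℕ} (hq : 0 < q) (hpq : IsCoprime p q)
    (hα : q * |q * α - p| < 1) (ρ : K) :
    ∃ j : ℤ, ∀ m < q, ⌊m * α + ρ⌋ = (m * p + j) / q := by
  -- The integers `q ⌊m α + ρ⌋ - m p` differ by less than `q`, so their maximum serves as `j`.
  obtain ⟨m₀, hm₀, hmax⟩ := Finset.exists_max_image (Finset.range q)
    (fun m : ℕ ↦ q * ⌊m * α + ρ⌋ - m * p) ⟨0, Finset.mem_range.2 hq⟩
  refine ⟨q * ⌊m₀ * α + ρ⌋ - m₀ * p, fun m hm ↦ ?_⟩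
  have hle := hmax m (Finset.mem_range.2 hm)
  have hlt := mul_floor_sub_lt_add hpq hα ρ (Finset.mem_range.1 hm₀) hm
  rw [eq_comm, Int.ediv_eq_iff_of_pos (by exact_mod_cast hq)]
  constructor <;> linarith

theorem exists_mechanicalWord_eq_christoffelWord {α ρ : K} {p : ℤ} {q : ℕ} (hq : 0 < q)
    (hpq : IsCoprime p q) (hα : q * |q * α - p| < 1) (hρ : ⌊q * α + ρ⌋ = ⌊ρ⌋ + p) :
    ∃ j, mechanicalWord α ρ q = christoffelWord p q j := by
  obtain ⟨j, hj⟩ := exists_floor_eq_ediv hq hpq hα ρ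
  have hj_end : ⌊q * α + ρ⌋ = (q * p + j) / q := by
    have hj₀ : ⌊ρ⌋ = j / q := by simpa using hj 0 hq
    rw [hρ, hj₀, Int.mul_add_ediv_left _ _ (by omega), add_comm]
  have hj_succ {m : ℕ} (hm : m < q) : ⌊(m + 1) * α + ρ⌋ = (m * p + j + p) / q := by
    have hj_le : ⌊(m + 1 : ℕ) * α + ρ⌋ = ((m + 1 : ℕ) * p + j) / q := by
      obtain hlt | rfl := (Nat.succ_le_of_lt hm).lt_or_eq
      exacts [hj _ hlt, hj_end]
    push_cast at hj_le
    rw [hj_le, add_one_mul, add_right_comm]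
  refine ⟨j, List.map_congr_left fun m hm ↦ ?_⟩
  rw [List.mem_range] at hm
  rw [hj m hm, hj_succ hm, christoffelLetter]

theorem mechanicalWord_isRotated {α β ρ σ : K} {p : ℤ} {q : ℕ} (hq : 0 < q) (hpq : IsCoprime p q)
    (hα : q * |q * α - p| < 1) (hβ : q * |q * β - p| < 1)
    (hρ : ⌊q * α + ρ⌋ = ⌊ρ⌋ + p) (hσ : ⌊q * β + σ⌋ = ⌊σ⌋ + p) :
    mechanicalWord α ρ q ~r mechanicalWord β σ q := by
  obtain ⟨i, hi⟩ := exists_mechanicalWord_eq_christoffelWord hq hpq hα hρ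
  obtain ⟨j, hj⟩ := exists_mechanicalWord_eq_christoffelWord hq hpq hβ hσ
  rw [hi, hj]
  exact christoffelWord_isRotated hq hpq i j

theorem floor_add_eq_floor_of_fract {x ε : K} (h₀ : 0 ≤ Int.fract x + ε)
    (h₁ : Int.fract x + ε < 1) : ⌊x + ε⌋ = ⌊x⌋ := by
  rw [Int.floor_eq_iff]
  constructor <;> linarith [Int.fract_add_floor x]

theorem floor_add_sub_floor_eq_ite {α : K} (h₀ : 0 ≤ α) (h₁ : α ≤ 1) (x : K) :
    ⌊x + α⌋ - ⌊x⌋ = if 1 - α ≤ Int.fract x then 1 else 0 := by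
  split_ifs with h
  · rw [sub_eq_iff_eq_add, Int.floor_eq_iff]
    push_cast
    constructor <;> linarith [Int.fract_add_floor x, Int.fract_lt_one x]
  · rw [sub_eq_zero]
    apply floor_add_eq_floor_of_fract <;> linarith [Int.fract_nonneg x]

end MechanicalWords

section GoldenMean

theorem goldenOmega_eq_neg_goldenConj : goldenOmega = -Real.goldenConj := by
  rw [goldenOmega]
  ring

theorem goldenOmega_pos : 0 < goldenOmega := by
  rw [goldenOmega_eq_neg_goldenConj]
  exact neg_pos.2 Real.goldenConj_neg

theorem goldenOmega_lt_one : goldenOmega < 1 := by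
  rw [goldenOmega_eq_neg_goldenConj, neg_lt]
  exact Real.neg_one_lt_goldenConj

theorem goldenOmega_sq : goldenOmega ^ 2 = 1 - goldenOmega := by
  rw [goldenOmega_eq_neg_goldenConj, neg_sq, Real.goldenConj_sq]
  ring

theorem half_lt_goldenOmega : 1 / 2 < goldenOmega := by
  nlinarith [goldenOmega_sq, goldenOmega_pos]

theorem goldenOmega_pow_add_two_le_one_sub (k : ℕ) : goldenOmega ^ (k + 2) ≤ 1 - goldenOmega := by
  rw [← goldenOmega_sq]
  exact pow_le_pow_of_le_one goldenOmega_pos.le goldenOmega_lt_one.le (by omega)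

theorem fib_succ_mul_goldenOmega (n : ℕ) :
    Nat.fib (n + 1) * goldenOmega = Nat.fib n - (-goldenOmega) ^ (n + 1) := by
  rw [goldenOmega_eq_neg_goldenConj, neg_neg, ← Real.goldenConj_mul_fib_succ_add_fib]
  ring

theorem fib_succ_lt_goldenRatio_pow (n : ℕ) :
    (Nat.fib (n + 1) : ℝ) < Real.goldenRatio ^ (n + 1) := by
  have hfib : (0 : ℝ) < Nat.fib (n + 1) := mod_cast Nat.fib_pos.2 n.succ_pos
  rw [← Real.goldenRatio_mul_fib_succ_add_fib]
  nlinarith [Real.one_lt_goldenRatio, (Nat.fib n).cast_nonneg (α := ℝ)]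

theorem fib_succ_mul_abs_sub_fib_lt_one (n : ℕ) :
    Nat.fib (n + 1) * |Nat.fib (n + 1) * goldenOmega - Nat.fib n| < 1 := by
  rw [fib_succ_mul_goldenOmega, sub_sub_cancel_left, abs_neg, abs_pow, abs_neg,
    abs_of_pos goldenOmega_pos, goldenOmega_eq_neg_goldenConj, ← Real.inv_goldenRatio, inv_pow,
    ← div_eq_mul_inv, div_lt_one (pow_pos Real.goldenRatio_pos _)]
  exact fib_succ_lt_goldenRatio_pow n

theorem floor_goldenOmega_sub_neg_pow (k : ℕ) :
    ⌊goldenOmega - (-goldenOmega) ^ (k + 2)⌋ = ⌊goldenOmega⌋ := by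
  have hfract : Int.fract goldenOmega = goldenOmega :=
    Int.fract_eq_self.2 ⟨goldenOmega_pos.le, goldenOmega_lt_one⟩
  have hpow_pos : 0 < goldenOmega ^ (k + 2) := pow_pos goldenOmega_pos _
  rw [sub_eq_add_neg]
  obtain hk | hk := k.even_or_odd
  · rw [(hk.add even_two).neg_pow]
    apply floor_add_eq_floor_of_fract <;>
      linarith [goldenOmega_pow_add_two_le_one_sub k, half_lt_goldenOmega]
  · have hpow_lt : goldenOmega ^ (k + 2) < goldenOmega ^ 2 :=
      pow_lt_pow_right_of_lt_one₀ goldenOmega_pos goldenOmega_lt_one (by have := hk.pos; omega)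
    rw [(hk.add_even even_two).neg_pow, neg_neg]
    apply floor_add_eq_floor_of_fract <;> linarith [goldenOmega_pos, goldenOmega_sq]

theorem floor_add_neg_goldenOmega_pow_odd_or_even (x : ℝ) :
    (∀ k, Odd k → ⌊x + (-goldenOmega) ^ (k + 2)⌋ = ⌊x⌋) ∨
    (∀ k, Even k → ⌊x + (-goldenOmega) ^ (k + 2)⌋ = ⌊x⌋) := by
  have hpow_pos (k : ℕ) : 0 < goldenOmega ^ (k + 2) := pow_pos goldenOmega_pos _
  have hpow_lt (k : ℕ) : goldenOmega ^ (k + 2) < 1 / 2 := by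
    linarith [goldenOmega_pow_add_two_le_one_sub k, half_lt_goldenOmega]
  obtain hhalf | hhalf := le_or_gt (1 / 2) (Int.fract x)
  · refine .inl fun k hk ↦ ?_
    rw [(hk.add_even even_two).neg_pow]
    apply floor_add_eq_floor_of_fract <;> linarith [Int.fract_lt_one x, hpow_pos k, hpow_lt k]
  · refine .inr fun k hk ↦ ?_
    rw [(hk.add even_two).neg_pow]
    apply floor_add_eq_floor_of_fract <;> linarith [Int.fract_nonneg x, hpow_pos k, hpow_lt k]

end GoldenMean

section FibonacciPotential

/-- The word `v_θ(a) v_θ(a + 1) ⋯ v_θ(a + n - 1)` of values of the Fibonacci potential. -/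
noncomputable def potentialWord (θ : ℝ) (a : ℤ) (n : ℕ) : List ℝ :=
  (List.range n).map fun m : ℕ ↦ vTheta θ (a + m)

theorem Mmat_eq_transferMatrix (lam θ E : ℝ) (n : ℕ) :
    Mmat lam θ E n = transferMatrix lam E (potentialWord θ 1 n) := by
  induction n with
  | zero => simp [Mmat, transferMatrix, potentialWord]
  | succ n ih =>
    rw [Mmat, ih]
    simp [transferMatrix, potentialWord, List.range_succ, Tmat, add_comm]

theorem potentialWord_succ (θ : ℝ) (a : ℤ) (n : ℕ) :
    potentialWord θ a (n + 1) = vTheta θ a :: potentialWord θ (a + 1) n := by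
  simp [potentialWord, List.range_succ_eq_map, Function.comp_def, add_assoc, add_comm (1 : ℤ)]

theorem Mneg_eq_inv_transferMatrix (lam θ E : ℝ) (n : ℕ) :
    Mneg lam θ E n = (transferMatrix lam E (potentialWord θ (1 - n) n))⁻¹ := by
  induction n with
  | zero => simp [Mneg, transferMatrix, potentialWord]
  | succ n ih =>
    have hstart : (1 : ℤ) - (n + 1 : ℕ) = -n := by push_cast; ring
    rw [Mneg, ih, ← Matrix.mul_inv_rev, hstart, potentialWord_succ, neg_add_eq_sub]
    simp [transferMatrix, Tmat]

theorem yTrace_eq_trace_transferMatrix (lam θ : ℝ) (k : ℕ) (E : ℝ) :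
    yTrace lam θ k E = (transferMatrix lam E
      (potentialWord θ (1 - Nat.fib (k + 2)) (Nat.fib (k + 2)))).trace := by
  rw [yTrace, Mneg_eq_inv_transferMatrix, trace_inv_eq_trace_of_det_eq_one (det_transferMatrix ..)]

theorem vTheta_eq_floor_sub_floor (θ : ℝ) (n : ℤ) :
    vTheta θ n = (⌊n * goldenOmega + θ + goldenOmega⌋ - ⌊n * goldenOmega + θ⌋ : ℤ) := by
  rw [floor_add_sub_floor_eq_ite goldenOmega_pos.le goldenOmega_lt_one.le, vTheta]
  simp [Set.mem_Ico, Int.fract_lt_one]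

theorem potentialWord_eq_map_mechanicalWord (θ : ℝ) (a : ℤ) (n : ℕ) :
    potentialWord θ a n = (mechanicalWord goldenOmega (a * goldenOmega + θ) n).map Int.cast := by
  rw [potentialWord, mechanicalWord, List.map_map]
  refine List.map_congr_left fun m _ ↦ ?_
  rw [vTheta_eq_floor_sub_floor, Function.comp_apply]
  push_cast
  ring_nf

theorem potentialWord_isRotated_of_floor_sub_eq {θ η : ℝ} {a b : ℤ} {n : ℕ}
    (ha : ⌊a * goldenOmega + θ - (-goldenOmega) ^ (n + 1)⌋ = ⌊a * goldenOmega + θ⌋)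
    (hb : ⌊b * goldenOmega + η - (-goldenOmega) ^ (n + 1)⌋ = ⌊b * goldenOmega + η⌋) :
    potentialWord θ a (Nat.fib (n + 1)) ~r potentialWord η b (Nat.fib (n + 1)) := by
  have hcoprime : IsCoprime (Nat.fib n : ℤ) (Nat.fib (n + 1)) :=
    Nat.isCoprime_iff_coprime.2 (Nat.fib_coprime_fib_succ n)
  have happrox := fib_succ_mul_abs_sub_fib_lt_one n
  have hgain {x : ℝ} (hx : ⌊x - (-goldenOmega) ^ (n + 1)⌋ = ⌊x⌋) :
      ⌊Nat.fib (n + 1) * goldenOmega + x⌋ = ⌊x⌋ + (Nat.fib n : ℤ) := by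
    rw [fib_succ_mul_goldenOmega, sub_add_eq_add_sub, add_sub_assoc, Int.floor_natCast_add, hx,
      add_comm]
  rw [potentialWord_eq_map_mechanicalWord, potentialWord_eq_map_mechanicalWord]
  exact (mechanicalWord_isRotated (Nat.fib_pos.2 n.succ_pos) hcoprime happrox happrox
    (hgain ha) (hgain hb)).map _

theorem potentialWord_isRotated_of_floor_add_eq {θ : ℝ} {k : ℕ}
    (h : ⌊θ + goldenOmega + (-goldenOmega) ^ (k + 2)⌋ = ⌊θ + goldenOmega⌋) :
    potentialWord θ (1 - Nat.fib (k + 2)) (Nat.fib (k + 2)) ~r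
      potentialWord 0 1 (Nat.fib (k + 2)) := by
  refine potentialWord_isRotated_of_floor_sub_eq ?_ (by simpa using floor_goldenOmega_sub_neg_pow k)
  have hstart : ((1 - Nat.fib (k + 2) : ℤ) : ℝ) * goldenOmega + θ =
      θ + goldenOmega + (-goldenOmega) ^ (k + 2) - Nat.fib (k + 1) := by
    push_cast
    linear_combination -fib_succ_mul_goldenOmega (k + 1)
  rw [hstart, sub_right_comm, add_sub_cancel_right, Int.floor_sub_natCast, Int.floor_sub_natCast, h]

theorem yTrace_eq_xTrace_of_floor_eq {θ : ℝ} {k : ℕ}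
    (h : ⌊θ + goldenOmega + (-goldenOmega) ^ (k + 2)⌋ = ⌊θ + goldenOmega⌋) (lam E : ℝ) :
    yTrace lam θ k E = xTrace lam 0 k E := by
  rw [yTrace_eq_trace_transferMatrix, xTrace, Mmat_eq_transferMatrix]
  exact trace_transferMatrix_eq_of_isRotated lam E (potentialWord_isRotated_of_floor_add_eq h)

end FibonacciPotential

theorem yTrace_phase_invariance_general (θ : ℝ) :
    (∀ k, Odd k → ∀ lam E : ℝ, yTrace lam θ k E = xTrace lam 0 k E) ∨
    (∀ k, Even k → ∀ lam E : ℝ, yTrace lam θ k E = xTrace lam 0 k E) :=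
  (floor_add_neg_goldenOmega_pow_odd_or_even (θ + goldenOmega)).imp
    (fun h k hk ↦ yTrace_eq_xTrace_of_floor_eq (h k hk))
    (fun h k hk ↦ yTrace_eq_xTrace_of_floor_eq (h k hk))

/-- For every `λ > 0` and every `θ`, either for all odd `k ≥ 1` and all `E ∈ ℝ` we have
`y_k(E, λ, θ) = x_k(E, λ, 0)`, or for all even `k ≥ 0` and all `E ∈ ℝ` we have
`y_k(E, λ, θ) = x_k(E, λ, 0)`. -/
theorem yTrace_phase_invariance (lam : ℝ) (hlam : 0 < lam) (θ : ℝ) :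
    (∀ k, Odd k → ∀ E : ℝ, yTrace lam θ k E = xTrace lam 0 k E) ∨
    (∀ k, Even k → ∀ E : ℝ, yTrace lam θ k E = xTrace lam 0 k E) :=
  (yTrace_phase_invariance_general θ).imp (fun h k hk ↦ h k hk lam) (fun h k hk ↦ h k hk lam)
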